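/- arXiv:2106.10913 — 2 statements merged into one kernel-verified Lean document; each statement's English description precedes it below -/
import Mathlib

section
/- Let A_+ ∈ ℝ^{n×n} be symmetric positive definite, let Λ_- ∈ ℝ^{n_-×n_-} be diagonal positive definite, let V_- ∈ ℝ^{n×n_-} have orthonormal columns, set A_- := V_- Λ_- (V_-)^T, and suppose A := A_+ − A_- is symmetric positive definite. Let W ∈ ℝ^{n×n_-} satisfy range(W) = range(A_+^{-1} V_-), and define Π_3 := I − W (W^T A W)^{-1} W^T A. Then A_- Π_3 = 0, and consequently A Π_3 = A_+ Π_3. -/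
/-!
Since `A₊ - A = V Λ Vᵀ`, the resolvent identity gives `A⁻¹ V = A₊⁻¹ V (1 + Λ Vᵀ A⁻¹ V)`, so the
columns of `A⁻¹ V` lie in `range (A₊⁻¹ V) = range W`. Hence `V = A W C` for some `C`. As `A` is
symmetric, `Vᵀ = Cᵀ (Wᵀ A)`, and `Wᵀ A` annihilates `Π₃`.
-/

open Matrix

section Range

variable {l m n R K : Type*} [Fintype m] [Fintype n]

theorem range_mulVecLin_le_iff_exists_mul_eq [CommSemiring R] {M : Matrix l m R}
    {N : Matrix l n R} :
    LinearMap.range M.mulVecLin ≤ LinearMap.range N.mulVecLin ↔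
      ∃ C : Matrix n m R, N * C = M := by
  classical
  constructor
  · intro h
    have col_mem : ∀ j, ∃ c, N *ᵥ c = M.col j := fun j ↦
      h ⟨Pi.single j 1, M.mulVec_single_one j⟩
    choose c hc using col_mem
    exact ⟨(of c)ᵀ, ext_col fun j ↦ hc j⟩
  · rintro ⟨C, rfl⟩
    rw [mulVecLin_mul]
    exact LinearMap.range_comp_le_range _ _

theorem mulVec_injective_iff_of_range_eq [Field K] {M N : Matrix l n K}
    (h : LinearMap.range M.mulVecLin = LinearMap.range N.mulVecLin) :
    Function.Injective M.mulVec ↔ Function.Injective N.mulVec := by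
  rw [mulVec_injective_iff, mulVec_injective_iff, linearIndependent_iff_card_eq_finrank_span,
    linearIndependent_iff_card_eq_finrank_span, Set.finrank, Set.finrank, ← range_mulVecLin,
    ← range_mulVecLin, h]

theorem mulVec_inv_mul_injective_of_mul_eq_one [CommRing R] [DecidableEq m] [DecidableEq n]
    {B : Matrix n n R} (hB : IsUnit B) {U : Matrix m n R} {V : Matrix n m R} (hUV : U * V = 1) :
    Function.Injective (B⁻¹ * V).mulVec := by
  have left_inv : U * B * (B⁻¹ * V) = 1 := by
    rw [Matrix.mul_assoc, mul_nonsing_inv_cancel_left _ _ ((isUnit_iff_isUnit_det _).1 hB), hUV]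
  refine Function.LeftInverse.injective (g := (U * B).mulVec) fun x ↦ ?_
  rw [mulVec_mulVec, left_inv, one_mulVec]

theorem isUnit_transpose_mul_mul_of_posDef [Field K] [PartialOrder K] [StarRing K] [TrivialStar K]
    [DecidableEq n] {A : Matrix m m K} (hA : A.PosDef) {W : Matrix m n K}
    (hW : Function.Injective W.mulVec) : IsUnit (Wᵀ * A * W) := by
  simpa only [conjTranspose_eq_transpose_of_trivial] using
    (hA.conjTranspose_mul_mul_same hW).isUnit

end Range

section Deflation

variable {k m n R : Type*} [Fintype k] [Fintype m] [Fintype n] [DecidableEq k] [DecidableEq n]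
  [CommRing R]

/-- The deflation projection `1 - W (Wᵀ A W)⁻¹ Wᵀ A`: for symmetric `A`, the complement of the
`A`-orthogonal projection onto the range of `W`. It is meaningful only when `Wᵀ A W` is invertible,
since otherwise the matrix inverse is `0`. -/
noncomputable def deflationProjection (A : Matrix n n R) (W : Matrix n k R) : Matrix n n R :=
  1 - W * (Wᵀ * A * W)⁻¹ * Wᵀ * A

theorem transpose_mul_mul_deflationProjection_eq_zero {A : Matrix n n R} {W : Matrix n k R}
    (hAW : IsUnit (Wᵀ * A * W)) : Wᵀ * A * deflationProjection A W = 0 := by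
  calc Wᵀ * A * deflationProjection A W
      = Wᵀ * A - (Wᵀ * A * W) * (Wᵀ * A * W)⁻¹ * (Wᵀ * A) := by
        simp only [deflationProjection, Matrix.mul_sub, Matrix.mul_one, Matrix.mul_assoc]
    _ = 0 := by
        rw [mul_nonsing_inv _ ((isUnit_iff_isUnit_det _).1 hAW), Matrix.one_mul, sub_self]

theorem transpose_mul_deflationProjection_eq_zero {A : Matrix n n R} (hA : A.IsSymm)
    (hA_unit : IsUnit A) {V : Matrix n m R} {W : Matrix n k R} (hAW : IsUnit (Wᵀ * A * W))
    (hVW : LinearMap.range (A⁻¹ * V).mulVecLin ≤ LinearMap.range W.mulVecLin) :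
    Vᵀ * deflationProjection A W = 0 := by
  obtain ⟨C, hC⟩ := range_mulVecLin_le_iff_exists_mul_eq.1 hVW
  have hV : V = A * (W * C) := by
    rw [hC, mul_nonsing_inv_cancel_left _ _ ((isUnit_iff_isUnit_det _).1 hA_unit)]
  have hVt : Vᵀ = Cᵀ * (Wᵀ * A) := by
    rw [hV, transpose_mul, transpose_mul, hA.eq, Matrix.mul_assoc]
  rw [hVt, Matrix.mul_assoc, transpose_mul_mul_deflationProjection_eq_zero hAW, Matrix.mul_zero]

theorem range_inv_mul_le_of_sub_eq_mul {A B : Matrix n n R} (hAB : IsUnit A ↔ IsUnit B)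
    {V : Matrix n m R} {N : Matrix m n R} (h : B - A = V * N) :
    LinearMap.range (A⁻¹ * V).mulVecLin ≤ LinearMap.range (B⁻¹ * V).mulVecLin := by
  classical
  refine range_mulVecLin_le_iff_exists_mul_eq.2 ⟨1 + N * A⁻¹ * V, ?_⟩
  have resolvent : A⁻¹ = B⁻¹ + B⁻¹ * (V * N) * A⁻¹ := by
    rw [← h, ← neg_sub A B, Matrix.mul_neg, Matrix.neg_mul, ← inv_sub_inv hAB.symm, neg_sub,
      add_sub_cancel]
  calc B⁻¹ * V * (1 + N * A⁻¹ * V) = (B⁻¹ + B⁻¹ * (V * N) * A⁻¹) * V := by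
        simp only [Matrix.mul_add, Matrix.add_mul, Matrix.mul_one, Matrix.mul_assoc]
    _ = A⁻¹ * V := by rw [← resolvent]

theorem stmt11_general {Aplus Aminus A : Matrix n n R} (hAplus : IsUnit Aplus)
    {V : Matrix n m R} {D : Matrix m m R} (hAminus : Aminus = V * D * Vᵀ)
    (hA : A = Aplus - Aminus) (hA_symm : A.IsSymm) (hA_unit : IsUnit A)
    {W : Matrix n k R} (hAW : IsUnit (Wᵀ * A * W))
    (hW : LinearMap.range (Aplus⁻¹ * V).mulVecLin ≤ LinearMap.range W.mulVecLin) :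
    Aminus * deflationProjection A W = 0 ∧
      A * deflationProjection A W = Aplus * deflationProjection A W := by
  have hsub : Aplus - A = V * (D * Vᵀ) := by
    rw [hA, sub_sub_cancel, hAminus, Matrix.mul_assoc]
  have hrange := (range_inv_mul_le_of_sub_eq_mul (iff_of_true hA_unit hAplus) hsub).trans hW
  have hzero : Aminus * deflationProjection A W = 0 := by
    rw [hAminus, Matrix.mul_assoc,
      transpose_mul_deflationProjection_eq_zero hA_symm hA_unit hAW hrange, Matrix.mul_zero]
  refine ⟨hzero, ?_⟩
  calc A * deflationProjection A W
      = Aplus * deflationProjection A W - Aminus * deflationProjection A W := by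
        rw [← Matrix.sub_mul, ← hA]
    _ = Aplus * deflationProjection A W := by rw [hzero, sub_zero]

end Deflation

theorem stmt11 {n nm : ℕ} (hn : 0 < n) (hnm : 0 < nm) (hle : nm ≤ n)
    (Aplus : Matrix (Fin n) (Fin n) ℝ) (hAplus : Aplus.PosDef)
    (d : Fin nm → ℝ) (hd : ∀ k, 0 < d k)
    (V : Matrix (Fin n) (Fin nm) ℝ) (hVortho : Vᵀ * V = 1)
    (Aminus : Matrix (Fin n) (Fin n) ℝ)
    (hAminus : Aminus = V * Matrix.diagonal d * Vᵀ)
    (A : Matrix (Fin n) (Fin n) ℝ)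
    (hA : A = Aplus - Aminus)
    (hApos : A.PosDef)
    (W : Matrix (Fin n) (Fin nm) ℝ)
    (hW : LinearMap.range W.mulVecLin = LinearMap.range (Aplus⁻¹ * V).mulVecLin)
    (P3 : Matrix (Fin n) (Fin n) ℝ)
    (hP3 : P3 = 1 - W * (Wᵀ * A * W)⁻¹ * Wᵀ * A) :
    Aminus * P3 = 0 ∧ A * P3 = Aplus * P3 := by
  have hW_inj : Function.Injective W.mulVec := (mulVec_injective_iff_of_range_eq hW).2
    (mulVec_inv_mul_injective_of_mul_eq_one hAplus.isUnit hVortho)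
  subst hP3
  exact stmt11_general hAplus.isUnit hAminus hA (isHermitian_iff_isSymm.1 hApos.isHermitian)
    hApos.isUnit (isUnit_transpose_mul_mul_of_posDef hApos hW_inj) hW.ge
end

section
/- Let A_+ ∈ ℝ^{n×n} be symmetric positive definite, let Λ_- ∈ ℝ^{n_-×n_-} be diagonal positive definite, let V_- ∈ ℝ^{n×n_-} have orthonormal columns, and suppose A := A_+ − V_- Λ_- (V_-)^T is symmetric positive definite. Let W ∈ ℝ^{n×n_-} satisfy range(W) = range(A_+^{-1} V_-), define Π_3 := I − W (W^T A W)^{-1} W^T A, and let H_2 ∈ ℝ^{n×n} be symmetric positive definite such that every eigenvalue of H_2 A_+ lies in [λ_min, λ_max] with 0 < λ_min ≤ λ_max. Define the hybrid AWG preconditioner H_{3,hyb} := Π_3 H_2 (Π_3)^T + W (W^T A W)^{-1} W^T. Then every eigenvalue λ of H_{3,hyb} A satisfies min(1, λ_min) ≤ λ ≤ max(1, λ_max). -/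
open Matrix

/-!
Write `Q = W (Wᴴ A W)⁻¹ Wᴴ` and `Π = 1 - Q A`. For a positive definite `P`, the eigenvalues of `H P`
lie in `[a, b]` exactly when `a P⁻¹ ≤ H ≤ b P⁻¹` in the Loewner order, so hypothesis and conclusion
become Loewner bounds, on `H` relative to `Aplus⁻¹` and on `Π H Πᴴ + Q` relative to `A⁻¹`.
If `A = Aplus - V C`, then `A⁻¹ - Aplus⁻¹ = Aplus⁻¹ V C A⁻¹`, and `Π` annihilates the range of
`Aplus⁻¹ V`, so `Π Aplus⁻¹ Πᴴ = Π A⁻¹ Πᴴ = A⁻¹ - Q`. Conjugating the bounds on `H` by `Π` and adding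
`Q` gives `a (A⁻¹ - Q) + Q ≤ Π H Πᴴ + Q ≤ b (A⁻¹ - Q) + Q`, and one concludes by `0 ≤ Q ≤ A⁻¹`.
-/

section LinearAlgebra

lemma injective_of_range_eq_range {K E F : Type*} [Field K] [AddCommGroup E] [Module K E]
    [FiniteDimensional K E] [AddCommGroup F] [Module K F] {f g : E →ₗ[K] F}
    (hf : Function.Injective f) (h : LinearMap.range g = LinearMap.range f) :
    Function.Injective g := by
  have hrank := LinearMap.finrank_range_of_inj hf
  have hnullity := g.finrank_range_add_finrank_ker
  rw [h] at hnullity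
  rw [← LinearMap.ker_eq_bot, ← Submodule.finrank_eq_zero (R := K)]
  lia

variable {l m n p R : Type*} [Fintype n] [Fintype p]

lemma mul_eq_zero_of_range_le_range [Fintype m] [CommSemiring R]
    {X : Matrix l m R} {W : Matrix m n R} {M : Matrix m p R} (hXW : X * W = 0)
    (hM : LinearMap.range M.mulVecLin ≤ LinearMap.range W.mulVecLin) : X * M = 0 := by
  classical
  have hker : LinearMap.range W.mulVecLin ≤ LinearMap.ker X.mulVecLin := by
    rw [LinearMap.range_le_ker_iff, ← mulVecLin_mul, hXW, mulVecLin_zero]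
  have hcomp := LinearMap.range_le_ker_iff.mp (hM.trans hker)
  rw [← mulVecLin_mul] at hcomp
  exact ext_of_mulVec_single fun i ↦ by
    simpa only [mulVecLin_apply, zero_mulVec, LinearMap.zero_apply] using
      LinearMap.congr_fun hcomp (Pi.single i 1)

lemma mulVec_injective_of_mul_eq_one [Fintype m] [DecidableEq n] [Semiring R] {X : Matrix n m R}
    {Y : Matrix m n R} (h : X * Y = 1) : Function.Injective Y.mulVec :=
  Function.LeftInverse.injective (g := X.mulVec) fun x ↦ by rw [mulVec_mulVec, h, one_mulVec]

lemma mulVec_injective_inv_mul [Fintype m] [DecidableEq m] [Field R] {P : Matrix m m R}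
    {V : Matrix m n R} (hP : IsUnit P) (hV : Function.Injective V.mulVec) :
    Function.Injective (P⁻¹ * V).mulVec := by
  have hPinv : Function.Injective P⁻¹.mulVec :=
    mulVec_injective_iff_isUnit.mpr (isUnit_nonsing_inv_iff.mpr hP)
  simpa only [Function.comp_def, mulVec_mulVec] using hPinv.comp hV

lemma spectrum_subset_iff_forall_mulVec_eq_smul [DecidableEq n] [Field R] {M : Matrix n n R}
    {s : Set R} : spectrum R M ⊆ s ↔ ∀ μ x, x ≠ 0 → M *ᵥ x = μ • x → μ ∈ s := by
  rw [← spectrum_toLin']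
  constructor
  · intro h μ x hx hMx
    exact h (Module.End.hasEigenvalue_of_hasEigenvector
      ⟨Module.End.mem_eigenspace_iff.mpr hMx, hx⟩).mem_spectrum
  · intro h μ hμ
    obtain ⟨x, hx⟩ := (Module.End.hasEigenvalue_iff_mem_spectrum.mpr hμ).exists_hasEigenvector
    exact h μ x hx.2 hx.apply_eq_smul

end LinearAlgebra

section OrderedModule

variable {R E : Type*} [Ring R] [LinearOrder R] [AddCommGroup E] [PartialOrder E]
  [IsOrderedAddMonoid E] [Module R E] [IsOrderedModule R E] {q x : E}

lemma min_one_smul_le_smul_sub_add (hq : 0 ≤ q) (hqx : q ≤ x) (a : R) :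
    min 1 a • x ≤ a • (x - q) + q :=
  calc min 1 a • x = min 1 a • (x - q) + min 1 a • q := by rw [← smul_add, sub_add_cancel]
    _ ≤ a • (x - q) + (1 : R) • q :=
      add_le_add (smul_le_smul_of_nonneg_right (min_le_right 1 a) (sub_nonneg.mpr hqx))
        (smul_le_smul_of_nonneg_right (min_le_left 1 a) hq)
    _ = a • (x - q) + q := by rw [one_smul]

lemma smul_sub_add_le_max_one_smul (hq : 0 ≤ q) (hqx : q ≤ x) (b : R) :
    b • (x - q) + q ≤ max 1 b • x :=
  calc b • (x - q) + q = b • (x - q) + (1 : R) • q := by rw [one_smul]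
    _ ≤ max 1 b • (x - q) + max 1 b • q :=
      add_le_add (smul_le_smul_of_nonneg_right (le_max_right 1 b) (sub_nonneg.mpr hqx))
        (smul_le_smul_of_nonneg_right (le_max_left 1 b) hq)
    _ = max 1 b • x := by rw [← smul_add, sub_add_cancel]

end OrderedModule

section Loewner

open scoped MatrixOrder ComplexOrder

variable {n 𝕜 : Type*} [Fintype n] [DecidableEq n] [RCLike 𝕜] {P H : Matrix n n 𝕜}

lemma spectrum_subset_Icc_iff (hH : H.IsHermitian) {a b : ℝ} :
    spectrum ℝ H ⊆ Set.Icc a b ↔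
      H ∈ Set.Icc (algebraMap ℝ (Matrix n n 𝕜) a) (algebraMap ℝ (Matrix n n 𝕜) b) := by
  rw [Set.mem_Icc, algebraMap_le_iff_le_spectrum hH, le_algebraMap_iff_spectrum_le hH,
    ← forall₂_and]
  rfl

lemma conj_le_conj_iff {S X Y : Matrix n n 𝕜} (hS : S.IsHermitian) (hSu : IsUnit S) :
    S * X * S ≤ S * Y * S ↔ X ≤ Y := by
  rw [← sub_nonneg, ← sub_nonneg (a := Y), ← hSu.star_left_conjugate_nonneg_iff (x := Y - X),
    star_eq_conjTranspose, hS.eq, mul_sub, sub_mul]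

lemma spectrum_mul_subset_Icc_iff (hP : P.PosDef) (hH : H.IsHermitian) {a b : ℝ} :
    spectrum ℝ (H * P) ⊆ Set.Icc a b ↔ H ∈ Set.Icc (a • P⁻¹) (b • P⁻¹) := by
  obtain ⟨S, hS, hSS⟩ : ∃ S : Matrix n n 𝕜, S.IsHermitian ∧ S * S = P :=
    ⟨CFC.sqrt P, (CFC.sqrt_nonneg P).posSemidef.isHermitian,
      CFC.sqrt_mul_sqrt_self P hP.posSemidef.nonneg⟩
  have hSu : IsUnit S := isUnit_of_mul_isUnit_left (hSS ▸ hP.isUnit)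
  have hSdet : IsUnit S.det := (isUnit_iff_isUnit_det S).mp hSu
  have hspec : spectrum ℝ (H * P) = spectrum ℝ (S * H * S) := by
    rw [← spectrum.units_conjugate (u := hSu.unit), coe_units_inv, IsUnit.unit_spec, ← hSS,
      ← mul_assoc, ← mul_assoc, mul_nonsing_inv_cancel_right _ _ hSdet]
  have hconj (c : ℝ) : S * (c • P⁻¹) * S = algebraMap ℝ (Matrix n n 𝕜) c := by
    rw [← hSS, Matrix.mul_inv_rev, mul_smul_comm, smul_mul_assoc,
      mul_nonsing_inv_cancel_left _ _ hSdet, nonsing_inv_mul _ hSdet,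
      Algebra.algebraMap_eq_smul_one]
  have hSHS : (S * H * S).IsHermitian := by
    simpa only [hS.eq] using isHermitian_mul_mul_conjTranspose S hH
  rw [hspec, spectrum_subset_Icc_iff hSHS, Set.mem_Icc, ← hconj, ← hconj,
    conj_le_conj_iff hS hSu, conj_le_conj_iff hS hSu, Set.mem_Icc]

end Loewner

section HybridPreconditioner

variable {k n R : Type*} [Fintype k] [DecidableEq k] [Fintype n] [CommRing R] [StarRing R]

/-- The coarse solve `W (Wᴴ A W)⁻¹ Wᴴ` on the coarse space spanned by the columns of `W`. -/
noncomputable def coarseCorrection (A : Matrix n n R) (W : Matrix n k R) : Matrix n n R :=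
  W * (Wᴴ * A * W)⁻¹ * Wᴴ

variable {A : Matrix n n R} {W : Matrix n k R}

lemma isHermitian_coarseCorrection (hA : A.IsHermitian) : (coarseCorrection A W).IsHermitian :=
  isHermitian_mul_mul_conjTranspose W (isHermitian_conjTranspose_mul_mul W hA).inv

variable [DecidableEq n]

/-- The deflation operator `Π = 1 - W (Wᴴ A W)⁻¹ Wᴴ A` (`Π₃` in the paper). If `Wᴴ A W` is
invertible, it is the `A`-orthogonal projection with kernel the column space of `W`. -/
noncomputable def deflation (A : Matrix n n R) (W : Matrix n k R) : Matrix n n R :=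
  1 - coarseCorrection A W * A

/-- The hybrid two-level preconditioner `Π H Πᴴ + W (Wᴴ A W)⁻¹ Wᴴ` with one-level preconditioner `H`
(`H_{3,hyb}` in the paper, for `H = H₂`). -/
noncomputable def hybridPreconditioner (A : Matrix n n R) (W : Matrix n k R) (H : Matrix n n R) :
    Matrix n n R :=
  deflation A W * H * (deflation A W)ᴴ + coarseCorrection A W

lemma hybridPreconditioner_eq_transpose [TrivialStar R] (A : Matrix n n R) (W : Matrix n k R)
    (H : Matrix n n R) :
    hybridPreconditioner A W H =
      (1 - W * (Wᵀ * A * W)⁻¹ * Wᵀ * A) * H * (1 - W * (Wᵀ * A * W)⁻¹ * Wᵀ * A)ᵀ +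
        W * (Wᵀ * A * W)⁻¹ * Wᵀ := by
  simp only [hybridPreconditioner, deflation, coarseCorrection,
    conjTranspose_eq_transpose_of_trivial]

lemma deflation_mul_self (hW : IsUnit (Wᴴ * A * W)) : deflation A W * W = 0 := by
  rw [deflation, coarseCorrection, Matrix.sub_mul, Matrix.one_mul, sub_eq_zero]
  calc W = W * ((Wᴴ * A * W)⁻¹ * (Wᴴ * A * W)) := by
        rw [nonsing_inv_mul _ ((isUnit_iff_isUnit_det _).mp hW), Matrix.mul_one]
    _ = W * (Wᴴ * A * W)⁻¹ * Wᴴ * A * W := by simp only [Matrix.mul_assoc]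

lemma deflation_mul_coarseCorrection (hW : IsUnit (Wᴴ * A * W)) :
    deflation A W * coarseCorrection A W = 0 := by
  rw [coarseCorrection, ← Matrix.mul_assoc, ← Matrix.mul_assoc, deflation_mul_self hW,
    Matrix.zero_mul, Matrix.zero_mul]

lemma deflation_mul_inv_mul_conjTranspose (hA : A.IsHermitian) (hAu : IsUnit A)
    (hW : IsUnit (Wᴴ * A * W)) :
    deflation A W * A⁻¹ * (deflation A W)ᴴ = A⁻¹ - coarseCorrection A W := by
  have hAdet := (isUnit_iff_isUnit_det A).mp hAu
  have hadj : A⁻¹ * (deflation A W)ᴴ = A⁻¹ - coarseCorrection A W := by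
    rw [deflation, conjTranspose_sub, conjTranspose_one, conjTranspose_mul, hA.eq,
      (isHermitian_coarseCorrection hA).eq, mul_sub, mul_one, nonsing_inv_mul_cancel_left _ _ hAdet]
  rw [mul_assoc, hadj, mul_sub, deflation_mul_coarseCorrection hW, sub_zero, deflation, sub_mul,
    one_mul, mul_nonsing_inv_cancel_right _ _ hAdet]

lemma deflation_mul_inv_eq {m : Type*} [Fintype m] {Aplus : Matrix n n R} {V : Matrix n m R}
    {C : Matrix m n R} (hA : A = Aplus - V * C) (hAplusu : IsUnit Aplus) (hAu : IsUnit A)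
    (hW : IsUnit (Wᴴ * A * W))
    (hrange : LinearMap.range (Aplus⁻¹ * V).mulVecLin ≤ LinearMap.range W.mulVecLin) :
    deflation A W * Aplus⁻¹ = deflation A W * A⁻¹ := by
  have hannihilate : deflation A W * (Aplus⁻¹ * V) = 0 :=
    mul_eq_zero_of_range_le_range (deflation_mul_self hW) hrange
  have hdiff : A⁻¹ - Aplus⁻¹ = Aplus⁻¹ * V * (C * A⁻¹) := by
    rw [← neg_sub, Matrix.inv_sub_inv (iff_of_true hAplusu hAu), hA, sub_sub_cancel_left]
    simp only [Matrix.mul_neg, Matrix.neg_mul, neg_neg, Matrix.mul_assoc]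
  rw [eq_comm, ← sub_eq_zero, ← mul_sub, hdiff, ← Matrix.mul_assoc, hannihilate, Matrix.zero_mul]

end HybridPreconditioner

section Bounds

open scoped MatrixOrder ComplexOrder

variable {k n 𝕜 : Type*} [Fintype k] [DecidableEq k] [Fintype n] [RCLike 𝕜]
  {A : Matrix n n 𝕜} {W : Matrix n k 𝕜}

lemma coarseCorrection_nonneg (hA : A.PosSemidef) : 0 ≤ coarseCorrection A W :=
  ((hA.conjTranspose_mul_mul_same W).inv.mul_mul_conjTranspose_same W).nonneg

variable [DecidableEq n]

lemma hybridPreconditioner_mono : Monotone (hybridPreconditioner A W) := fun _ _ h ↦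
  add_le_add_left (star_right_conjugate_le_conjugate h (deflation A W)) _

lemma coarseCorrection_le_inv (hA : A.PosDef) (hW : IsUnit (Wᴴ * A * W)) :
    coarseCorrection A W ≤ A⁻¹ := by
  rw [← sub_nonneg, ← deflation_mul_inv_mul_conjTranspose hA.isHermitian hA.isUnit hW]
  exact star_right_conjugate_nonneg hA.inv.posSemidef.nonneg (deflation A W)

theorem stmt13_general {m : Type*} [Fintype m] {Aplus H : Matrix n n 𝕜} {V : Matrix n m 𝕜}
    {C : Matrix m n 𝕜} (hAplus : Aplus.PosDef) (hA : A = Aplus - V * C) (hApos : A.PosDef)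
    (hW : Function.Injective W.mulVec)
    (hrange : LinearMap.range (Aplus⁻¹ * V).mulVecLin ≤ LinearMap.range W.mulVecLin)
    (hH : H.IsHermitian) {a b : ℝ} (hspec : spectrum ℝ (H * Aplus) ⊆ Set.Icc a b) :
    spectrum ℝ (hybridPreconditioner A W H * A) ⊆ Set.Icc (min 1 a) (max 1 b) := by
  have hWu : IsUnit (Wᴴ * A * W) := (hApos.conjTranspose_mul_mul_same hW).isUnit
  have hQ := coarseCorrection_nonneg (W := W) hApos.posSemidef
  have hQA := coarseCorrection_le_inv hApos hWu
  have hhybrid (c : ℝ) : hybridPreconditioner A W (c • Aplus⁻¹) =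
      c • (A⁻¹ - coarseCorrection A W) + coarseCorrection A W := by
    rw [hybridPreconditioner, mul_smul_comm, smul_mul_assoc,
      deflation_mul_inv_eq hA hAplus.isUnit hApos.isUnit hWu hrange,
      deflation_mul_inv_mul_conjTranspose hApos.isHermitian hApos.isUnit hWu]
  have hHerm : (hybridPreconditioner A W H).IsHermitian :=
    (isHermitian_mul_mul_conjTranspose _ hH).add (isHermitian_coarseCorrection hApos.isHermitian)
  obtain ⟨haH, hHb⟩ := (spectrum_mul_subset_Icc_iff hAplus hH).mp hspec
  rw [spectrum_mul_subset_Icc_iff hApos hHerm]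
  constructor
  · calc min 1 a • A⁻¹ ≤ hybridPreconditioner A W (a • Aplus⁻¹) :=
          hhybrid a ▸ min_one_smul_le_smul_sub_add hQ hQA a
      _ ≤ hybridPreconditioner A W H := hybridPreconditioner_mono haH
  · calc hybridPreconditioner A W H ≤ hybridPreconditioner A W (b • Aplus⁻¹) :=
          hybridPreconditioner_mono hHb
      _ ≤ max 1 b • A⁻¹ := hhybrid b ▸ smul_sub_add_le_max_one_smul hQ hQA b

end Bounds

theorem stmt13 {n nm : ℕ} (hn : 0 < n) (hnm : 0 < nm) (hle : nm ≤ n)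
    (Aplus : Matrix (Fin n) (Fin n) ℝ) (hAplus : Aplus.PosDef)
    (d : Fin nm → ℝ) (hd : ∀ k, 0 < d k)
    (V : Matrix (Fin n) (Fin nm) ℝ) (hVortho : Vᵀ * V = 1)
    (A : Matrix (Fin n) (Fin n) ℝ)
    (hA : A = Aplus - V * Matrix.diagonal d * Vᵀ)
    (hApos : A.PosDef)
    (W : Matrix (Fin n) (Fin nm) ℝ)
    (hW : LinearMap.range W.mulVecLin = LinearMap.range (Aplus⁻¹ * V).mulVecLin)
    (P3 : Matrix (Fin n) (Fin n) ℝ)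
    (hP3 : P3 = 1 - W * (Wᵀ * A * W)⁻¹ * Wᵀ * A)
    (H2 : Matrix (Fin n) (Fin n) ℝ) (hH2 : H2.PosDef)
    (lmin lmax : ℝ) (hlmin : 0 < lmin) (hlml : lmin ≤ lmax)
    (hspec : ∀ (lam : ℝ) (x : Fin n → ℝ), x ≠ 0 →
      (H2 * Aplus) *ᵥ x = lam • x → lmin ≤ lam ∧ lam ≤ lmax)
    (H3hyb : Matrix (Fin n) (Fin n) ℝ)
    (hH3hyb : H3hyb = P3 * H2 * P3ᵀ + W * (Wᵀ * A * W)⁻¹ * Wᵀ) :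
    ∀ (lam : ℝ) (x : Fin n → ℝ), x ≠ 0 → (H3hyb * A) *ᵥ x = lam • x →
      min 1 lmin ≤ lam ∧ lam ≤ max 1 lmax := by
  have hWinj : Function.Injective W.mulVec := injective_of_range_eq_range
    (mulVec_injective_inv_mul hAplus.isUnit (mulVec_injective_of_mul_eq_one hVortho)) hW
  rw [Matrix.mul_assoc] at hA
  rw [hH3hyb, hP3, ← hybridPreconditioner_eq_transpose]
  exact spectrum_subset_iff_forall_mulVec_eq_smul.mp <| stmt13_general hAplus hA hApos hWinj hW.ge
    hH2.isHermitian (spectrum_subset_iff_forall_mulVec_eq_smul.mpr hspec)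
end
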